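/- Fix t > 0 and set r = √(t/(1+t)), r' = 1/√(1+t). The function f(K) = (η_K(t)·exp(2·((2/π)·𝒦(r)·𝒦'(r) + log(r'/r))))^{1/K} is strictly decreasing on [1, ∞), with f(1) = exp(4·𝒦(r)·𝒦'(r)/π) and f(K) → exp(2μ(r')) as K → ∞, so f maps [1, ∞) onto (exp(2μ(r')), exp(4·𝒦(r)·𝒦'(r)/π)]. In particular, for every K > 1, t·exp(2·(K·μ(r') − (2/π)·𝒦(r)·𝒦'(r))) < η_K(t) < t·exp((4/π)·(K−1)·𝒦(r)·𝒦'(r)). -/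

import Mathlib

open Set Filter

/-- Complete elliptic integral of the first kind. -/
noncomputable def ellK (r : ℝ) : ℝ :=
  ∫ θ in (0:ℝ)..(Real.pi / 2), (1 - r ^ 2 * Real.sin θ ^ 2) ^ (-(1/2) : ℝ)

/-- The Grötzsch modulus μ(r) = (π/2)·𝒦'(r)/𝒦(r). -/
noncomputable def mu (r : ℝ) : ℝ :=
  Real.pi / 2 * ellK (Real.sqrt (1 - r ^ 2)) / ellK r



noncomputable def AA (p x : ℝ) : ℝ := ∫ θ in (0:ℝ)..(Real.pi / 2), (1 - x * Real.sin θ ^ 2) ^ p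

lemma base_ge {x : ℝ} (hx0 : 0 ≤ x) (θ : ℝ) : 1 - x ≤ 1 - x * Real.sin θ ^ 2 := by
  have := Real.sin_sq_le_one θ
  nlinarith

lemma base_pos {x : ℝ} (hx1 : x < 1) (θ : ℝ) : 0 < 1 - x * Real.sin θ ^ 2 := by
  have h1 := Real.sin_sq_le_one θ
  have h2 := sq_nonneg (Real.sin θ)
  rcases le_total x 0 with h | h
  · nlinarith
  · nlinarith

lemma base_cont {x : ℝ} (hx1 : x < 1) (p : ℝ) :
    Continuous fun θ : ℝ => (1 - x * Real.sin θ ^ 2) ^ p := by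
  apply Continuous.rpow_const (by fun_prop)
  intro θ
  exact Or.inl (base_pos hx1 θ).ne'

lemma AA_hasDerivAt (p : ℝ) {x : ℝ} (hx0 : 0 < x) (hx1 : x < 1) :
    HasDerivAt (AA p) (p * (AA p x - AA (p - 1) x) / x) x := by
  have hs : Set.Ioo (0:ℝ) ((1 + x) / 2) ∈ nhds x := Ioo_mem_nhds hx0 (by linarith)
  have key := (intervalIntegral.hasDerivAt_integral_of_dominated_loc_of_deriv_le
    (μ := MeasureTheory.volume) (a := 0) (b := Real.pi / 2) (s := Set.Ioo (0:ℝ) ((1 + x) / 2))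
    (F := fun y θ => (1 - y * Real.sin θ ^ 2) ^ p)
    (F' := fun y θ => (-(Real.sin θ ^ 2)) * p * (1 - y * Real.sin θ ^ 2) ^ (p - 1))
    (x₀ := x)
    (bound := fun _ => |p| * (((1 - x) / 2) ^ (p - 1) + 1)) hs ?_ ?_ ?_ ?_ ?_ ?_).2
  · refine key.congr_deriv ?_
    rw [eq_div_iff hx0.ne']
    unfold AA
    rw [← intervalIntegral.integral_sub, ← intervalIntegral.integral_const_mul,
      ← intervalIntegral.integral_mul_const]
    · apply intervalIntegral.integral_congr
      intro θ _
      have h := base_pos hx1 θ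
      simp only
      have : (1 - x * Real.sin θ ^ 2) ^ p
        = (1 - x * Real.sin θ ^ 2) ^ (p - 1) * (1 - x * Real.sin θ ^ 2) := by
        rw [← Real.rpow_add_one h.ne']; ring_nf
      rw [this]; ring
    · exact (base_cont hx1 _).intervalIntegrable _ _
    · exact (base_cont hx1 _).intervalIntegrable _ _
  · filter_upwards [hs] with y hy
    exact (base_cont (by linarith [hy.2]) _).aestronglyMeasurable
  · exact (base_cont hx1 _).intervalIntegrable _ _
  · apply Continuous.aestronglyMeasurable
    have := base_cont hx1 (p - 1)
    fun_prop
  · refine Filter.Eventually.of_forall fun θ _ y hy => ?_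
    have hy1 : y < 1 := by linarith [hy.2]
    have h := base_pos hy1 θ
    have h2 := base_ge hy.1.le θ
    have hs1 := Real.sin_sq_le_one θ
    have hs0 := sq_nonneg (Real.sin θ)
    have hb : (1 - y * Real.sin θ ^ 2) ^ (p - 1) ≤ ((1 - x) / 2) ^ (p - 1) + 1 := by
      rcases le_total 0 (p - 1) with hp | hp
      · have := Real.rpow_le_one h.le (by nlinarith [hy.1] : 1 - y * Real.sin θ ^ 2 ≤ 1) hp
        have := Real.rpow_nonneg (by linarith : 0 ≤ (1 - x) / 2) (p - 1)
        linarith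
      · have := Real.rpow_le_rpow_of_nonpos (by linarith : 0 < (1 - x) / 2)
          (by linarith [hy.2] : (1 - x) / 2 ≤ 1 - y * Real.sin θ ^ 2) hp
        linarith
    have hb0 := Real.rpow_nonneg h.le (p - 1)
    rw [Real.norm_eq_abs, abs_mul, abs_mul, abs_neg, abs_of_nonneg hs0, abs_of_nonneg hb0]
    apply mul_le_mul _ hb hb0 (abs_nonneg _)
    nlinarith [abs_nonneg p]
  · exact intervalIntegrable_const
  · refine Filter.Eventually.of_forall fun θ _ y hy => ?_
    have hy1 : y < 1 := by linarith [hy.2]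
    have h := base_pos hy1 θ
    have h1 : HasDerivAt (fun y : ℝ => 1 - y * Real.sin θ ^ 2) (-(Real.sin θ ^ 2)) y := by
      simpa using ((hasDerivAt_id y).mul_const (Real.sin θ ^ 2)).const_sub 1
    simpa using h1.rpow_const (p := p) (Or.inl h.ne')

/-- `(1-x) ∫ Δ^{-3} = ∫ Δ`. -/
lemma AA_identity {x : ℝ} (hx1 : x < 1) :
    (1 - x) * AA (-(1/2) - 1) x = AA (1/2) x := by
  have hd : ∀ θ : ℝ, HasDerivAt
      (fun θ => Real.sin θ * Real.cos θ * (1 - x * Real.sin θ ^ 2) ^ (-(1/2) : ℝ) * x)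
      ((1 - x * Real.sin θ ^ 2) ^ (1/2 : ℝ)
        - (1 - x) * (1 - x * Real.sin θ ^ 2) ^ (-(1/2) - 1 : ℝ)) θ := by
    intro θ
    have h := base_pos hx1 θ
    have h1 : HasDerivAt (fun θ : ℝ => 1 - x * Real.sin θ ^ 2)
        (-(x * (2 * Real.sin θ * Real.cos θ))) θ := by
      simpa using (((Real.hasDerivAt_sin θ).pow 2).const_mul x).const_sub 1
    have h2 := h1.rpow_const (p := -(1/2)) (Or.inl h.ne')
    have h3 := (((Real.hasDerivAt_sin θ).mul (Real.hasDerivAt_cos θ)).mul h2).mul_const x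
    refine h3.congr_deriv ?_
    have e1 : (1 - x * Real.sin θ ^ 2) ^ (-(1/2) : ℝ)
        = (1 - x * Real.sin θ ^ 2) ^ (-(1/2) - 1 : ℝ) * (1 - x * Real.sin θ ^ 2) := by
      rw [← Real.rpow_add_one h.ne']; ring_nf
    have e2 : (1 - x * Real.sin θ ^ 2) ^ (1/2 : ℝ)
        = (1 - x * Real.sin θ ^ 2) ^ (-(1/2) : ℝ) * (1 - x * Real.sin θ ^ 2) := by
      rw [← Real.rpow_add_one h.ne']; norm_num
    simp only [Pi.mul_apply]
    rw [e2, e1]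
    have hc : Real.cos θ ^ 2 = 1 - Real.sin θ ^ 2 := by
      have := Real.sin_sq_add_cos_sq θ; linarith
    generalize (1 - x * Real.sin θ ^ 2) ^ (-(1/2) - 1 : ℝ) = T
    linear_combination (T * (1 - x * Real.sin θ ^ 2) * x + x ^ 2 * Real.sin θ ^ 2 * T) * hc
  have hi1 := (base_cont hx1 (1/2)).intervalIntegrable (μ := MeasureTheory.volume) 0 (Real.pi/2)
  have hi2 := ((base_cont hx1 (-(1/2) - 1)).intervalIntegrable
    (μ := MeasureTheory.volume) 0 (Real.pi/2)).const_mul (1 - x)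
  have := intervalIntegral.integral_eq_sub_of_hasDerivAt (a := 0) (b := Real.pi/2)
    (fun θ _ => hd θ) (hi1.sub hi2)
  rw [intervalIntegral.integral_sub hi1 hi2, intervalIntegral.integral_const_mul] at this
  simp only [Real.sin_zero, Real.cos_pi_div_two] at this
  unfold AA
  linarith

lemma AA_const (c : ℝ) : (∫ _ in (0:ℝ)..(Real.pi / 2), c) = Real.pi / 2 * c := by
  simp

lemma AA_le {x p : ℝ} (hx0 : 0 ≤ x) (hx1 : x < 1) (hp : p ≤ 0) :
    AA p x ≤ Real.pi / 2 * (1 - x) ^ p := by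
  rw [← AA_const]
  apply intervalIntegral.integral_mono_on (by positivity)
    ((base_cont hx1 _).intervalIntegrable _ _) intervalIntegrable_const
  intro θ _
  exact Real.rpow_le_rpow_of_nonpos (by linarith) (base_ge hx0 θ) hp

lemma AA_ge {x p : ℝ} (hx0 : 0 ≤ x) (hx1 : x < 1) (hp : p ≤ 0) :
    Real.pi / 2 ≤ AA p x := by
  rw [← mul_one (Real.pi / 2), ← AA_const]
  apply intervalIntegral.integral_mono_on (by positivity) intervalIntegrable_const
    ((base_cont hx1 _).intervalIntegrable _ _) 
  intro θ _
  exact Real.one_le_rpow_of_pos_of_le_one_of_nonpos (base_pos hx1 θ)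
    (by nlinarith [sq_nonneg (Real.sin θ)]) hp

lemma AA_half_ge {x : ℝ} (hx0 : 0 ≤ x) (hx1 : x < 1) :
    Real.pi / 2 * (1 - x) ^ (1/2 : ℝ) ≤ AA (1/2) x := by
  rw [← AA_const]
  apply intervalIntegral.integral_mono_on (by positivity) intervalIntegrable_const
    ((base_cont hx1 _).intervalIntegrable _ _) 
  intro θ _
  exact Real.rpow_le_rpow (by linarith) (base_ge hx0 θ) (by norm_num)

lemma AA_half_le {x : ℝ} (hx0 : 0 ≤ x) (hx1 : x < 1) :
    AA (1/2) x ≤ Real.pi / 2 := by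
  rw [← mul_one (Real.pi / 2), ← AA_const]
  apply intervalIntegral.integral_mono_on (by positivity)
    ((base_cont hx1 _).intervalIntegrable _ _) intervalIntegrable_const
  intro θ _
  exact Real.rpow_le_one (base_pos hx1 θ).le (by nlinarith [sq_nonneg (Real.sin θ)]) (by norm_num)

lemma AA_half_cont : Continuous (AA (1/2)) := by
  unfold AA
  apply intervalIntegral.continuous_parametric_intervalIntegral_of_continuous'
  unfold Function.uncurry
  apply Continuous.rpow_const (by fun_prop)
  intro _
  exact Or.inr (by norm_num)

lemma AA_half_one : AA (1/2) 1 = 1 := by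
  unfold AA
  have : ∫ θ in (0:ℝ)..(Real.pi / 2), (1 - 1 * Real.sin θ ^ 2) ^ (1/2 : ℝ)
      = ∫ θ in (0:ℝ)..(Real.pi / 2), Real.cos θ := by
    apply intervalIntegral.integral_congr
    intro θ hθ
    rw [Set.uIcc_of_le (by positivity)] at hθ
    simp only [one_mul]
    rw [← Real.cos_sq', ← Real.sqrt_eq_rpow, Real.sqrt_sq]
    exact Real.cos_nonneg_of_mem_Icc ⟨by linarith [hθ.1, Real.pi_pos], hθ.2⟩
  rw [this]; simp

lemma AA_lt {x : ℝ} (hx0 : 0 < x) (hx1 : x < 1) : AA (-(1/2)) x < AA (-(1/2) - 1) x := by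
  apply intervalIntegral.integral_lt_integral_of_continuousOn_of_le_of_exists_lt (by positivity)
    (base_cont hx1 _).continuousOn (base_cont hx1 _).continuousOn
  · intro θ _
    exact Real.rpow_le_rpow_of_exponent_ge (base_pos hx1 θ)
      (by nlinarith [sq_nonneg (Real.sin θ)]) (by norm_num)
  · refine ⟨Real.pi / 2, ⟨by positivity, le_rfl⟩, ?_⟩
    apply Real.rpow_lt_rpow_of_exponent_gt (base_pos hx1 _) <;> norm_num
    exact hx0

noncomputable def FF (x : ℝ) : ℝ := AA (-(1/2)) x

lemma ellK_eq (r : ℝ) : ellK r = FF (r ^ 2) := rfl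

lemma FF_deriv {x : ℝ} (hx0 : 0 < x) (hx1 : x < 1) :
    HasDerivAt FF ((AA (1/2) x - (1 - x) * FF x) / (2 * x * (1 - x))) x := by
  refine (AA_hasDerivAt (-(1/2)) hx0 hx1).congr_deriv ?_
  rw [← AA_identity hx1]
  have : 1 - x ≠ 0 := by linarith
  unfold FF
  field_simp
  ring

lemma FF_deriv_pos {x : ℝ} (hx0 : 0 < x) (hx1 : x < 1) :
    0 < (AA (1/2) x - (1 - x) * FF x) / (2 * x * (1 - x)) := by
  have h1 : 0 < 1 - x := by linarith
  apply div_pos _ (by positivity)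
  rw [← AA_identity hx1]
  have := AA_lt hx0 hx1
  unfold FF
  nlinarith

lemma EE_deriv {x : ℝ} (hx0 : 0 < x) (hx1 : x < 1) :
    HasDerivAt (AA (1/2)) ((AA (1/2) x - FF x) / (2 * x)) x := by
  refine (AA_hasDerivAt (1/2) hx0 hx1).congr_deriv ?_
  have : (1/2 - 1 : ℝ) = -(1/2) := by norm_num
  rw [this]
  unfold FF
  field_simp

lemma rev_deriv {f : ℝ → ℝ} {f' x : ℝ} (h : HasDerivAt f f' (1 - x)) :
    HasDerivAt (fun y => f (1 - y)) (-f') x := by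
  have := HasDerivAt.comp x h ((hasDerivAt_id x).const_sub 1)
  refine this.congr_deriv ?_
  ring

lemma FF_pos {x : ℝ} (hx0 : 0 < x) (hx1 : x < 1) : 0 < FF x := by
  have := AA_ge hx0.le hx1 (by norm_num : (-(1/2) : ℝ) ≤ 0)
  have := Real.pi_pos
  unfold FF
  linarith

lemma FF_le {x : ℝ} (hx0 : 0 < x) (hx1 : x < 1) : FF x ≤ Real.pi / 2 * (1 - x) ^ (-(1/2) : ℝ) :=
  AA_le hx0.le hx1 (by norm_num)

lemma FF_ge {x : ℝ} (hx0 : 0 < x) (hx1 : x < 1) : Real.pi / 2 ≤ FF x :=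
  AA_ge hx0.le hx1 (by norm_num)

noncomputable def Leg (x : ℝ) : ℝ :=
  AA (1/2) x * FF (1 - x) + AA (1/2) (1 - x) * FF x - FF x * FF (1 - x)

lemma Leg_deriv {x : ℝ} (hx0 : 0 < x) (hx1 : x < 1) : HasDerivAt Leg 0 x := by
  have e1 := EE_deriv hx0 hx1
  have e2 := rev_deriv (EE_deriv (x := 1 - x) (by linarith) (by linarith))
  have f1 := FF_deriv hx0 hx1
  have f2 := rev_deriv (FF_deriv (x := 1 - x) (by linarith) (by linarith))
  refine (((e1.mul f2).add (e2.mul f1)).sub (f1.mul f2)).congr_deriv ?_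
  have : 1 - x ≠ 0 := by linarith
  have h : 1 - (1 - x) = x := by ring
  rw [h]
  field_simp
  ring

lemma FF_tendsto : Filter.Tendsto FF (nhdsWithin 0 (Set.Ioi 0)) (nhds (Real.pi / 2)) := by
  have hc : Filter.Tendsto (fun x : ℝ => Real.pi / 2 * (1 - x) ^ (-(1/2) : ℝ))
      (nhdsWithin 0 (Set.Ioi 0)) (nhds (Real.pi / 2)) := by
    have : ContinuousAt (fun x : ℝ => Real.pi / 2 * (1 - x) ^ (-(1/2) : ℝ)) 0 := by
      apply ContinuousAt.mul continuousAt_const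
      apply ContinuousAt.rpow_const (by fun_prop)
      simp
    have h2 := this.tendsto.mono_left (nhdsWithin_le_nhds (s := Set.Ioi 0))
    simpa using h2
  have hm : Set.Ioo (0:ℝ) 1 ∈ nhdsWithin (0:ℝ) (Set.Ioi 0) := Ioo_mem_nhdsGT one_pos
  refine tendsto_of_tendsto_of_tendsto_of_le_of_le' tendsto_const_nhds hc ?_ ?_
  · filter_upwards [hm] with x hx using FF_ge hx.1 hx.2
  · filter_upwards [hm] with x hx using FF_le hx.1 hx.2

lemma Leg_tendsto : Filter.Tendsto Leg (nhdsWithin 0 (Set.Ioi 0)) (nhds (Real.pi / 2)) := by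
  have hm : Set.Ioo (0:ℝ) 1 ∈ nhdsWithin (0:ℝ) (Set.Ioi 0) := Ioo_mem_nhdsGT one_pos
  have h1 : Filter.Tendsto (fun x => AA (1/2) (1 - x)) (nhdsWithin 0 (Set.Ioi 0)) (nhds 1) := by
    have : ContinuousAt (fun x => AA (1/2) (1 - x)) 0 :=
      (AA_half_cont.comp (by fun_prop : Continuous fun x : ℝ => 1 - x)).continuousAt
    have h2 := this.tendsto.mono_left (nhdsWithin_le_nhds (s := Set.Ioi 0))
    simp only [sub_zero, AA_half_one] at h2
    exact h2
  have h2 : Filter.Tendsto (fun x => (FF x - AA (1/2) x) * FF (1 - x))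
      (nhdsWithin 0 (Set.Ioi 0)) (nhds 0) := by
    have hc : Filter.Tendsto (fun x : ℝ => (Real.pi / 2) ^ 2 * x ^ (1/2 : ℝ) * (1 - x) ^ (-(1/2) : ℝ))
        (nhdsWithin 0 (Set.Ioi 0)) (nhds 0) := by
      have : ContinuousAt (fun x : ℝ => (Real.pi / 2) ^ 2 * x ^ (1/2 : ℝ) * (1 - x) ^ (-(1/2) : ℝ)) 0 := by
        apply ContinuousAt.mul
        · apply ContinuousAt.mul continuousAt_const
          apply ContinuousAt.rpow_const (by fun_prop)
          norm_num
        apply ContinuousAt.rpow_const (by fun_prop)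
        simp
      have h2 := this.tendsto.mono_left (nhdsWithin_le_nhds (s := Set.Ioi 0))
      simpa using h2
    refine tendsto_of_tendsto_of_tendsto_of_le_of_le' tendsto_const_nhds hc ?_ ?_
    · filter_upwards [hm] with x hx
      have a := FF_ge hx.1 hx.2
      have b := AA_half_le hx.1.le hx.2
      have c := FF_pos (x := 1 - x) (by linarith [hx.2]) (by linarith [hx.1])
      exact mul_nonneg (by linarith) c.le
    · filter_upwards [hm] with x hx
      have a := FF_le hx.1 hx.2
      have b := AA_half_ge hx.1.le hx.2
      have c := FF_pos (x := 1 - x) (by linarith [hx.2]) (by linarith [hx.1])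
      have d := FF_le (x := 1 - x) (by linarith [hx.2]) (by linarith [hx.1])
      have hx1 : 0 < 1 - x := by linarith [hx.2]
      rw [sub_sub_cancel] at d
      have e1 : (1 - x) ^ (1/2 : ℝ) = (1 - x) ^ (-(1/2) : ℝ) * (1 - x) := by
        rw [← Real.rpow_add_one hx1.ne']; norm_num
      have e2 : x ^ (1/2 : ℝ) = x ^ (-(1/2) : ℝ) * x := by
        rw [← Real.rpow_add_one hx.1.ne']; norm_num
      have p1 := Real.rpow_pos_of_pos hx1 (-(1/2))
      have p2 := Real.rpow_pos_of_pos hx.1 (-(1/2))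
      rw [e1] at b
      rw [e2]
      have q : FF x - AA (1/2) x ≤ Real.pi / 2 * ((1 - x) ^ (-(1/2) : ℝ) * x) := by
        nlinarith
      calc _ ≤ Real.pi / 2 * ((1 - x) ^ (-(1/2) : ℝ) * x) * (Real.pi / 2 * x ^ (-(1/2) : ℝ)) := by
            apply mul_le_mul q d c.le
            have := Real.pi_pos
            have := hx.1
            positivity
        _ = _ := by ring
  have h3 := (h1.mul FF_tendsto).sub h2
  refine (h3.congr ?_).trans (by simp)
  intro x
  unfold Leg
  ring

lemma Leg_eq {x : ℝ} (hx0 : 0 < x) (hx1 : x < 1) : Leg x = Real.pi / 2 := by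
  have hconst : ∀ y ∈ Set.Ioo (0:ℝ) 1, Leg y = Leg x := by
    intro y hy
    apply isOpen_Ioo.is_const_of_deriv_eq_zero (isPreconnected_Ioo)
      (s := Set.Ioo (0:ℝ) 1) _ _ hy ⟨hx0, hx1⟩
    · intro z hz
      exact (Leg_deriv hz.1 hz.2).differentiableAt.differentiableWithinAt
    · intro z hz
      exact (Leg_deriv hz.1 hz.2).deriv
  have hm : Set.Ioo (0:ℝ) 1 ∈ nhdsWithin (0:ℝ) (Set.Ioi 0) := Ioo_mem_nhdsGT one_pos
  have : Filter.Tendsto Leg (nhdsWithin 0 (Set.Ioi 0)) (nhds (Leg x)) := by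
    apply tendsto_const_nhds.congr'
    filter_upwards [hm] with y hy using (hconst y hy).symm
  exact tendsto_nhds_unique this Leg_tendsto

noncomputable def DD (x : ℝ) : ℝ := (AA (1/2) x - (1 - x) * FF x) / (2 * x * (1 - x))

lemma wronskian {x : ℝ} (hx0 : 0 < x) (hx1 : x < 1) :
    FF x * DD (1 - x) + DD x * FF (1 - x) = Real.pi / (4 * x * (1 - x)) := by
  have h := Leg_eq hx0 hx1
  have h1 : 1 - x ≠ 0 := by linarith
  have : Real.pi = 2 * Leg x := by linarith
  rw [this]
  unfold DD Leg
  rw [sub_sub_cancel]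
  field_simp
  ring

noncomputable def yy (x : ℝ) : ℝ := Real.pi / 2 * FF (1 - x) / FF x
noncomputable def LL (x : ℝ) : ℝ := Real.log (1 - x) - Real.log x
noncomputable def NN (x : ℝ) : ℝ := 4 / Real.pi * (FF x * FF (1 - x)) - LL x

lemma mu_eq {u : ℝ} (hu : u ∈ Set.Ioo (0:ℝ) 1) : mu u = yy (u ^ 2) := by
  unfold mu yy
  rw [ellK_eq, ellK_eq, Real.sq_sqrt]
  nlinarith [hu.1, hu.2]

lemma yy_pos {x : ℝ} (hx0 : 0 < x) (hx1 : x < 1) : 0 < yy x := by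
  have := FF_pos hx0 hx1
  have := FF_pos (x := 1 - x) (by linarith) (by linarith)
  have := Real.pi_pos
  unfold yy
  positivity

lemma yy_deriv {x : ℝ} (hx0 : 0 < x) (hx1 : x < 1) :
    HasDerivAt yy (-(Real.pi ^ 2 / (8 * x * (1 - x) * FF x ^ 2))) x := by
  have f1 : HasDerivAt FF (DD x) x := FF_deriv hx0 hx1
  have f2 : HasDerivAt (fun y => FF (1 - y)) (-DD (1 - x)) x :=
    rev_deriv (FF_deriv (x := 1 - x) (by linarith) (by linarith))
  have hF := FF_pos hx0 hx1
  refine ((f2.const_mul (Real.pi / 2)).div f1 hF.ne').congr_deriv ?_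
  have w := wronskian hx0 hx1
  have h1 : 1 - x ≠ 0 := by linarith
  have : Real.pi / 2 * -DD (1 - x) * FF x - Real.pi / 2 * FF (1 - x) * DD x
      = -(Real.pi / 2) * (Real.pi / (4 * x * (1 - x))) := by rw [← w]; ring
  rw [this]
  field_simp
  norm_num

lemma LL_deriv {x : ℝ} (hx0 : 0 < x) (hx1 : x < 1) :
    HasDerivAt LL (-(1 / (x * (1 - x)))) x := by
  have h1 : 1 - x ≠ 0 := by linarith
  have a := rev_deriv (Real.hasDerivAt_log h1)
  refine (a.sub (Real.hasDerivAt_log hx0.ne')).congr_deriv ?_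
  field_simp
  ring

lemma NN_deriv {x : ℝ} (hx0 : 0 < x) (hx1 : x < 1) :
    HasDerivAt NN (8 / Real.pi * (DD x * FF (1 - x))) x := by
  have f1 : HasDerivAt FF (DD x) x := FF_deriv hx0 hx1
  have f2 : HasDerivAt (fun y => FF (1 - y)) (-DD (1 - x)) x :=
    rev_deriv (FF_deriv (x := 1 - x) (by linarith) (by linarith))
  refine (((f1.mul f2).const_mul (4 / Real.pi)).sub (LL_deriv hx0 hx1)).congr_deriv ?_
  have w := wronskian hx0 hx1
  have h1 : 1 - x ≠ 0 := by linarith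
  have hp := Real.pi_pos
  have w' : FF x * DD (1 - x) = Real.pi / (4 * x * (1 - x)) - DD x * FF (1 - x) := by linarith
  have : DD x * FF (1 - x) + FF x * -DD (1 - x)
    = 2 * (DD x * FF (1 - x)) - Real.pi / (4 * x * (1 - x)) := by linarith
  rw [this]
  field_simp
  ring

lemma yy_anti : StrictAntiOn yy (Set.Ioo 0 1) := by
  apply strictAntiOn_of_deriv_neg (convex_Ioo 0 1)
  · intro x hx
    exact (yy_deriv hx.1 hx.2).continuousAt.continuousWithinAt
  · intro x hx
    rw [interior_Ioo] at hx
    rw [(yy_deriv hx.1 hx.2).deriv]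
    have := FF_pos hx.1 hx.2
    have := hx.1
    have : 0 < 1 - x := by linarith [hx.2]
    have := Real.pi_pos
    simp only [Left.neg_neg_iff]
    positivity

lemma NN_mono : StrictMonoOn NN (Set.Ioo 0 1) := by
  apply strictMonoOn_of_deriv_pos (convex_Ioo 0 1)
  · intro x hx
    exact (NN_deriv hx.1 hx.2).continuousAt.continuousWithinAt
  · intro x hx
    rw [interior_Ioo] at hx
    rw [(NN_deriv hx.1 hx.2).deriv]
    have := FF_pos (x := 1 - x) (by linarith [hx.2]) (by linarith [hx.1])
    have : 0 < DD x := FF_deriv_pos hx.1 hx.2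
    have := Real.pi_pos
    positivity

noncomputable def HH (a x : ℝ) : ℝ := (LL x + NN a) / yy x

lemma HH_deriv (a : ℝ) {x : ℝ} (hx0 : 0 < x) (hx1 : x < 1) :
    HasDerivAt (HH a) (Real.pi ^ 2 / (8 * x * (1 - x) * FF x ^ 2) * (NN a - NN x) / yy x ^ 2) x := by
  have hy := yy_pos hx0 hx1
  refine (((LL_deriv hx0 hx1).add_const (NN a)).div (yy_deriv hx0 hx1) hy.ne').congr_deriv ?_
  congr 1
  have hp := Real.pi_pos
  have hF := FF_pos hx0 hx1
  have h1 : 1 - x ≠ 0 := by linarith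
  have e : NN x = 8 / Real.pi ^ 2 * FF x ^ 2 * yy x - LL x := by
    unfold NN yy
    field_simp
    ring
  rw [e]
  field_simp
  ring

lemma HH_mono {a : ℝ} (ha0 : 0 < a) (ha1 : a < 1) : StrictMonoOn (HH a) (Set.Ioc 0 a) := by
  apply strictMonoOn_of_deriv_pos (convex_Ioc 0 a)
  · intro x hx
    exact (HH_deriv a hx.1 (by linarith [hx.2])).continuousAt.continuousWithinAt
  · intro x hx
    rw [interior_Ioc] at hx
    have hx1 : x < 1 := by linarith [hx.2]
    rw [(HH_deriv a hx.1 hx1).deriv]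
    have := FF_pos hx.1 hx1
    have := yy_pos hx.1 hx1
    have := hx.1
    have : 0 < 1 - x := by linarith
    have := Real.pi_pos
    have : 0 < NN a - NN x := by
      have := NN_mono ⟨hx.1, hx1⟩ ⟨ha0, ha1⟩ hx.2
      linarith
    positivity

lemma NN_lower {a x : ℝ} (ha1 : a < 1) (hx0 : 0 < x) (hx : x ≤ a) :
    NN a - 2 * Real.pi / (1 - a) * Real.sqrt a ≤ NN x := by
  have hp := Real.pi_pos
  have ha : 0 < 1 - a := by linarith
  have hd : ∀ y ∈ Set.Ioc 0 a, HasDerivAt (fun y => NN y - 2 * Real.pi / (1 - a) * Real.sqrt y)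
      (8 / Real.pi * (DD y * FF (1 - y)) - 2 * Real.pi / (1 - a) * (1 / (2 * Real.sqrt y))) y := by
    intro y hy
    exact (NN_deriv hy.1 (by linarith [hy.2])).sub
      ((Real.hasDerivAt_sqrt hy.1.ne').const_mul _)
  have anti : AntitoneOn (fun y => NN y - 2 * Real.pi / (1 - a) * Real.sqrt y) (Set.Ioc 0 a) := by
    apply antitoneOn_of_deriv_nonpos (convex_Ioc 0 a)
    · intro y hy
      exact (hd y hy).continuousAt.continuousWithinAt
    · intro y hy
      rw [interior_Ioc] at hy
      exact (hd y ⟨hy.1, hy.2.le⟩).differentiableAt.differentiableWithinAt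
    · intro y hy
      rw [interior_Ioc] at hy
      rw [(hd y ⟨hy.1, hy.2.le⟩).deriv]
      have hy1 : y < 1 := by linarith [hy.2]
      have hy0 := hy.1
      have h1y : 0 < 1 - y := by linarith
      have hs := Real.sqrt_pos.2 hy.1
      have hD : DD y ≤ Real.pi / (4 * (1 - a)) := by
        have : DD y ≤ Real.pi / (4 * (1 - y)) := by
          unfold DD
          rw [div_le_div_iff₀ (by positivity) (by positivity)]
          have e := AA_half_le hy0.le hy1
          have f := FF_ge hy0 hy1
          have : AA (1/2) y - (1 - y) * FF y ≤ Real.pi / 2 * y := by nlinarith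
          have : (AA (1/2) y - (1 - y) * FF y) * (4 * (1 - y)) ≤ Real.pi / 2 * y * (4 * (1 - y)) :=
            mul_le_mul_of_nonneg_right this (by linarith)
          linarith
        refine this.trans ?_
        apply div_le_div_of_nonneg_left hp.le (by linarith) (by linarith [hy.2])
      have hD0 : 0 < DD y := FF_deriv_pos hy0 hy1
      have hF : FF (1 - y) ≤ Real.pi / 2 * (1 / Real.sqrt y) := by
        have := FF_le (x := 1 - y) (by linarith) (by linarith)
        rw [sub_sub_cancel, Real.rpow_neg hy0.le, ← Real.sqrt_eq_rpow] at this
        simpa using this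
      have hF0 := FF_pos (x := 1 - y) (by linarith) (by linarith)
      have : DD y * FF (1 - y) ≤ Real.pi / (4 * (1 - a)) * (Real.pi / 2 * (1 / Real.sqrt y)) :=
        mul_le_mul hD hF hF0.le (by positivity)
      have h2 : 8 / Real.pi * (DD y * FF (1 - y))
          ≤ 8 / Real.pi * (Real.pi / (4 * (1 - a)) * (Real.pi / 2 * (1 / Real.sqrt y))) :=
        mul_le_mul_of_nonneg_left this (by positivity)
      have h3 : 8 / Real.pi * (Real.pi / (4 * (1 - a)) * (Real.pi / 2 * (1 / Real.sqrt y)))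
          = 2 * Real.pi / (1 - a) * (1 / (2 * Real.sqrt y)) := by
        field_simp
        norm_num
      linarith
  have := anti ⟨hx0, hx⟩ ⟨by linarith, le_rfl⟩ hx
  simp only at this
  have : 0 ≤ 2 * Real.pi / (1 - a) * Real.sqrt x := by positivity
  linarith

lemma LL_tendsto : Filter.Tendsto LL (nhdsWithin 0 (Set.Ioi 0)) Filter.atTop := by
  unfold LL
  have h1 : Filter.Tendsto (fun x : ℝ => Real.log (1 - x)) (nhdsWithin 0 (Set.Ioi 0)) (nhds 0) := by
    have : ContinuousAt (fun x : ℝ => Real.log (1 - x)) 0 := by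
      apply ContinuousAt.log (by fun_prop)
      simp
    have h2 := this.tendsto.mono_left (nhdsWithin_le_nhds (s := Set.Ioi 0))
    simpa using h2
  have h2 := Filter.tendsto_neg_atBot_atTop.comp Real.tendsto_log_nhdsGT_zero
  have := h1.add_atTop h2
  refine this.congr ?_
  intro x
  simp [sub_eq_add_neg]

lemma yy_eq {x : ℝ} (hx0 : 0 < x) (hx1 : x < 1) :
    yy x = Real.pi ^ 2 / 8 / FF x ^ 2 * (LL x + NN x) := by
  have hp := Real.pi_pos
  have hF := FF_pos hx0 hx1
  unfold NN yy
  field_simp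
  ring

lemma yy_tendsto : Filter.Tendsto yy (nhdsWithin 0 (Set.Ioi 0)) Filter.atTop := by
  have hm : Set.Ioo (0:ℝ) (1/2) ∈ nhdsWithin (0:ℝ) (Set.Ioi 0) := Ioo_mem_nhdsGT (by norm_num)
  have hp := Real.pi_pos
  have h1 : Filter.Tendsto (fun x => LL x + NN x) (nhdsWithin 0 (Set.Ioi 0)) Filter.atTop := by
    apply Filter.tendsto_atTop_add_right_of_le' _
      (NN (1/2) - 2 * Real.pi / (1 - 1/2) * Real.sqrt (1/2)) LL_tendsto
    filter_upwards [hm] with x hx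
    exact NN_lower (by norm_num) hx.1 hx.2.le
  have h2 := (tendsto_const_nhds (x := Real.pi ^ 2 / 8)).div (FF_tendsto.pow 2) (by positivity)
  have h3 := h2.pos_mul_atTop (by positivity) h1
  refine h3.congr' ?_
  filter_upwards [hm] with x hx
  exact (yy_eq hx.1 (by linarith [hx.2])).symm

lemma HH_tendsto {a : ℝ} (ha0 : 0 < a) (ha1 : a < 1) :
    Filter.Tendsto (HH a) (nhdsWithin 0 (Set.Ioi 0)) (nhds 2) := by
  have hm : Set.Ioo (0:ℝ) a ∈ nhdsWithin (0:ℝ) (Set.Ioi 0) := Ioo_mem_nhdsGT ha0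
  have hp := Real.pi_pos
  have h1 : Filter.Tendsto (fun x => (NN a - NN x) / yy x) (nhdsWithin 0 (Set.Ioi 0)) (nhds 0) := by
    have hc := (tendsto_const_nhds (x := 2 * Real.pi / (1 - a) * Real.sqrt a)).div_atTop yy_tendsto
    refine tendsto_of_tendsto_of_tendsto_of_le_of_le' tendsto_const_nhds hc ?_ ?_
    · filter_upwards [hm] with x hx
      have := NN_mono ⟨hx.1, by linarith [hx.2]⟩ ⟨ha0, ha1⟩ hx.2
      exact div_nonneg (by linarith) (yy_pos hx.1 (by linarith [hx.2])).le
    · filter_upwards [hm] with x hx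
      have := NN_lower ha1 hx.1 hx.2.le
      apply div_le_div_of_nonneg_right _ (yy_pos hx.1 (by linarith [hx.2])).le
      linarith
  have h2 := ((FF_tendsto.pow 2).const_mul (8 / Real.pi ^ 2)).add h1
  have e : 8 / Real.pi ^ 2 * (Real.pi / 2) ^ 2 + 0 = 2 := by field_simp; norm_num
  rw [e] at h2
  refine h2.congr' ?_
  filter_upwards [hm] with x hx
  have hx1 : x < 1 := by linarith [hx.2]
  have hy := yy_pos hx.1 hx1
  have hF := FF_pos hx.1 hx1
  unfold HH
  have e2 := yy_eq hx.1 hx1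
  have e3 : LL x = 8 / Real.pi ^ 2 * FF x ^ 2 * yy x - NN x := by
    rw [e2]; field_simp; ring
  rw [e3]
  field_simp
  ring

lemma HH_gt {a x : ℝ} (ha0 : 0 < a) (ha1 : a < 1) (hx : x ∈ Set.Ioc 0 a) : 2 < HH a x := by
  have hx0 := hx.1
  have h1 : HH a (x / 2) < HH a x :=
    HH_mono ha0 ha1 ⟨by linarith, by linarith [hx.2]⟩ hx (by linarith)
  have h2 : 2 ≤ HH a (x / 2) := by
    apply le_of_tendsto (HH_tendsto ha0 ha1)
    have hm : Set.Ioo (0:ℝ) (x/2) ∈ nhdsWithin (0:ℝ) (Set.Ioi 0) := Ioo_mem_nhdsGT (by linarith)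
    filter_upwards [hm] with z hz
    exact (HH_mono ha0 ha1 ⟨hz.1, by linarith [hz.2, hx.2]⟩
      ⟨by linarith, by linarith [hx.2]⟩ hz.2).le
  linarith

/-- Intermediate value: solve `yy x = v` for `v ≥ yy a`. -/
lemma yy_surj {a v : ℝ} (ha0 : 0 < a) (ha1 : a < 1) (hv : yy a ≤ v) :
    ∃ x ∈ Set.Ioc 0 a, yy x = v := by
  have hm : Set.Ioo (0:ℝ) a ∈ nhdsWithin (0:ℝ) (Set.Ioi 0) := Ioo_mem_nhdsGT ha0
  obtain ⟨b, hb, hbv⟩ := ((yy_tendsto.eventually_ge_atTop v).and hm).exists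
  have hc : ContinuousOn yy (Set.Icc b a) := fun x hx =>
    (yy_deriv (by linarith [hx.1, hbv.1]) (by linarith [hx.2])).continuousAt.continuousWithinAt
  obtain ⟨x, hx, hxv⟩ := intermediate_value_Icc' hbv.2.le hc ⟨hv, hb⟩
  exact ⟨x, ⟨by linarith [hx.1, hbv.1], hx.2⟩, hxv⟩

lemma HH_surj {a v : ℝ} (ha0 : 0 < a) (ha1 : a < 1) (hv : v ≤ HH a a) (hv2 : 2 < v) :
    ∃ x ∈ Set.Ioc 0 a, HH a x = v := by
  have hm : Set.Ioo (0:ℝ) a ∈ nhdsWithin (0:ℝ) (Set.Ioi 0) := Ioo_mem_nhdsGT ha0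
  obtain ⟨b, hb, hbv⟩ := (((HH_tendsto ha0 ha1).eventually_lt_const hv2).and hm).exists
  have hc : ContinuousOn (HH a) (Set.Icc b a) := fun x hx =>
    (HH_deriv a (by linarith [hx.1, hbv.1]) (by linarith [hx.2])).continuousAt.continuousWithinAt
  obtain ⟨x, hx, hxv⟩ := intermediate_value_Icc hbv.2.le hc ⟨hb.le, hv⟩
  exact ⟨x, ⟨by linarith [hx.1, hbv.1], hx.2⟩, hxv⟩

lemma HH_self {a : ℝ} (ha0 : 0 < a) (ha1 : a < 1) :
    yy a * HH a a = 4 / Real.pi * (FF a * FF (1 - a)) := by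
  have := yy_pos ha0 ha1
  unfold HH
  rw [mul_div_cancel₀ _ this.ne']
  unfold NN
  ring

theorem stmt_19 (eta : ℝ → ℝ → ℝ)
    (heta : ∀ K t : ℝ, 0 < K → 0 < t → ∀ u ∈ Set.Ioo (0:ℝ) 1,
      mu u = K * mu (1 / Real.sqrt (1 + t)) → eta K t = 1 / u ^ 2 - 1) (t : ℝ) (ht : 0 < t) (f : ℝ → ℝ)
    (hf : f = fun K : ℝ => (eta K t * Real.exp (2 * (2 / Real.pi *
      ellK (Real.sqrt (t / (1 + t))) * ellK (1 / Real.sqrt (1 + t)) +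
      Real.log ((1 / Real.sqrt (1 + t)) / Real.sqrt (t / (1 + t)))))) ^ (1 / K)) :
    StrictAntiOn f (Set.Ici 1) ∧
    f 1 = Real.exp (4 * ellK (Real.sqrt (t / (1 + t))) * ellK (1 / Real.sqrt (1 + t)) / Real.pi) ∧
    Filter.Tendsto f Filter.atTop (nhds (Real.exp (2 * mu (1 / Real.sqrt (1 + t))))) ∧
    f '' Set.Ici 1 = Set.Ioc (Real.exp (2 * mu (1 / Real.sqrt (1 + t))))
      (Real.exp (4 * ellK (Real.sqrt (t / (1 + t))) * ellK (1 / Real.sqrt (1 + t)) / Real.pi)) ∧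
    ∀ K : ℝ, 1 < K →
      t * Real.exp (2 * (K * mu (1 / Real.sqrt (1 + t)) -
        2 / Real.pi * ellK (Real.sqrt (t / (1 + t))) * ellK (1 / Real.sqrt (1 + t)))) < eta K t ∧
      eta K t < t * Real.exp (4 / Real.pi * (K - 1) * ellK (Real.sqrt (t / (1 + t))) *
        ellK (1 / Real.sqrt (1 + t))) := by
  have hp := Real.pi_pos
  obtain ⟨a, ha⟩ : ∃ a : ℝ, a = 1 / (1 + t) := ⟨_, rfl⟩
  have ha0 : 0 < a := by rw [ha]; positivity
  have ha1 : a < 1 := by rw [ha, div_lt_one (by linarith)]; linarith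
  have h1a : 1 - a = t / (1 + t) := by rw [ha]; field_simp; ring
  have hta : t = (1 - a) / a := by rw [h1a, ha]; field_simp
  have hs : (1 / Real.sqrt (1 + t)) ^ 2 = a := by
    rw [div_pow, Real.sq_sqrt (by linarith), ha]; norm_num
  have hs2 : Real.sqrt (t / (1 + t)) ^ 2 = 1 - a := by
    rw [Real.sq_sqrt (by positivity), h1a]
  have hr0 : 0 < 1 / Real.sqrt (1 + t) := by positivity
  have hr0' : 0 < Real.sqrt (t / (1 + t)) := by positivity
  have hr1 : 1 / Real.sqrt (1 + t) < 1 := by nlinarith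
  have hmu : mu (1 / Real.sqrt (1 + t)) = yy a := by rw [mu_eq ⟨hr0, hr1⟩, hs]
  have hK1 : ellK (Real.sqrt (t / (1 + t))) = FF (1 - a) := by rw [ellK_eq, hs2]
  have hK2 : ellK (1 / Real.sqrt (1 + t)) = FF a := by rw [ellK_eq, hs]
  have hLa : Real.log t = LL a := by
    rw [hta, Real.log_div (by linarith) ha0.ne']; rfl
  have hlog : Real.log ((1 / Real.sqrt (1 + t)) / Real.sqrt (t / (1 + t))) = - LL a / 2 := by
    have : 2 * Real.log ((1 / Real.sqrt (1 + t)) / Real.sqrt (t / (1 + t))) = - LL a := by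
      have h := Real.log_pow (n := 2) (x := (1 / Real.sqrt (1 + t)) / Real.sqrt (t / (1 + t)))
      rw [div_pow, hs, hs2, Real.log_div ha0.ne' (by linarith)] at h
      push_cast at h
      rw [← h]; unfold LL; ring
    linarith
  have hy := yy_pos ha0 ha1
  have hetav : ∀ K x : ℝ, x ∈ Set.Ioc 0 a → 0 < K → yy x = K * yy a →
      eta K t = Real.exp (LL x) := by
    intro K x hx hK hxK
    have hx0 := hx.1
    have hx1 : x < 1 := by linarith [hx.2]
    have hsx : Real.sqrt x ∈ Set.Ioo (0:ℝ) 1 :=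
      ⟨Real.sqrt_pos.2 hx0, by rw [Real.sqrt_lt' one_pos]; linarith⟩
    rw [heta K t hK ht (Real.sqrt x) hsx (by rw [mu_eq hsx, Real.sq_sqrt hx0.le, hmu, hxK]),
      Real.sq_sqrt hx0.le]
    unfold LL
    rw [Real.exp_sub, Real.exp_log hx0, Real.exp_log (by linarith)]
    field_simp
  rw [hmu, hK1, hK2]
  rw [hK1, hK2, hlog] at hf
  have hC : 2 * (2 / Real.pi * FF (1 - a) * FF a + -LL a / 2) = NN a := by
    unfold NN; ring
  rw [hC] at hf
  have hB : 4 * FF (1 - a) * FF a / Real.pi = yy a * HH a a := by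
    rw [HH_self ha0 ha1]; ring
  rw [hB]
  have hfv : ∀ K x : ℝ, x ∈ Set.Ioc 0 a → 0 < K → yy x = K * yy a →
      f K = Real.exp (yy a * HH a x) := by
    intro K x hx hK hxK
    rw [hf]
    simp only
    rw [hetav K x hx hK hxK, ← Real.exp_add, ← Real.exp_mul]
    congr 1
    unfold HH
    rw [hxK]
    field_simp
  have hex : ∀ K : ℝ, ∃ x, 1 ≤ K → x ∈ Set.Ioc 0 a ∧ yy x = K * yy a := by
    intro K
    by_cases hK : 1 ≤ K
    · obtain ⟨x, hx, hxv⟩ := yy_surj (v := K * yy a) ha0 ha1 (by nlinarith)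
      exact ⟨x, fun _ => ⟨hx, hxv⟩⟩
    · exact ⟨0, fun h => absurd h hK⟩
  choose X hX using hex
  have hamem : a ∈ Set.Ioc 0 a := ⟨ha0, le_rfl⟩
  have hf1 : f 1 = Real.exp (yy a * HH a a) := hfv 1 a hamem one_pos (by ring)
  have hanti : StrictAntiOn f (Set.Ici 1) := by
    intro K hK K' hK' hlt
    simp only [Set.mem_Ici] at hK hK'
    obtain ⟨h1, h2⟩ := hX K hK
    obtain ⟨h1', h2'⟩ := hX K' hK'
    rw [hfv K _ h1 (by linarith) h2, hfv K' _ h1' (by linarith) h2', Real.exp_lt_exp]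
    apply mul_lt_mul_of_pos_left _ hy
    apply HH_mono ha0 ha1 h1' h1
    rw [← yy_anti.lt_iff_gt ⟨h1.1, by linarith [h1.2]⟩ ⟨h1'.1, by linarith [h1'.2]⟩, h2, h2']
    exact mul_lt_mul_of_pos_right hlt hy
  have hgt : ∀ K, 1 ≤ K → Real.exp (2 * yy a) < f K := by
    intro K hK
    obtain ⟨h1, h2⟩ := hX K hK
    rw [hfv K _ h1 (by linarith) h2, Real.exp_lt_exp, mul_comm]
    exact mul_lt_mul_of_pos_left (HH_gt ha0 ha1 h1) hy
  have hXt : Filter.Tendsto X Filter.atTop (nhdsWithin 0 (Set.Ioi 0)) := by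
    rw [tendsto_nhdsWithin_iff]
    constructor
    · rw [tendsto_order]
      constructor
      · intro b hb
        filter_upwards [Filter.eventually_ge_atTop 1] with K hK
        exact hb.trans (hX K hK).1.1
      · intro b hb
        obtain ⟨c, hc0, hcb, hca⟩ : ∃ c, 0 < c ∧ c < b ∧ c < a :=
          ⟨min b a / 2, by positivity, by linarith [min_le_left b a, lt_min hb ha0],
            by linarith [min_le_right b a, lt_min hb ha0]⟩
        filter_upwards [Filter.eventually_ge_atTop 1, Filter.eventually_gt_atTop (yy c / yy a)]
          with K hK hK2
        obtain ⟨h1, h2⟩ := hX K hK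
        rw [div_lt_iff₀ hy, ← h2] at hK2
        rw [yy_anti.lt_iff_gt ⟨hc0, by linarith⟩ ⟨h1.1, by linarith [h1.2]⟩] at hK2
        linarith
    · filter_upwards [Filter.eventually_ge_atTop 1] with K hK
      exact (hX K hK).1.1
  have hlim : Filter.Tendsto f Filter.atTop (nhds (Real.exp (2 * yy a))) := by
    have h := ((HH_tendsto ha0 ha1).comp hXt).const_mul (yy a)
    have h2 := (Real.continuous_exp.tendsto _).comp h
    rw [mul_comm (yy a) 2] at h2
    refine h2.congr' ?_
    filter_upwards [Filter.eventually_ge_atTop 1] with K hK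
    obtain ⟨h1, h2⟩ := hX K hK
    rw [hfv K _ h1 (by linarith) h2]
    rfl
  refine ⟨hanti, hf1, hlim, ?_, ?_⟩
  · ext v
    constructor
    · rintro ⟨K, hK, rfl⟩
      refine ⟨hgt K hK, ?_⟩
      rw [← hf1]
      exact hanti.antitoneOn (Set.mem_Ici.2 le_rfl) hK hK
    · rintro ⟨hv1, hv2⟩
      have hv0 : 0 < v := (Real.exp_pos _).trans hv1
      rw [← Real.lt_log_iff_exp_lt hv0] at hv1
      rw [← Real.log_le_iff_le_exp hv0] at hv2
      obtain ⟨x, hx, hxv⟩ := HH_surj (v := Real.log v / yy a) ha0 ha1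
        (by rw [div_le_iff₀ hy]; linarith) (by rw [lt_div_iff₀ hy]; linarith)
      have hK1 : 1 ≤ yy x / yy a := by
        rw [le_div_iff₀ hy, one_mul]
        exact yy_anti.antitoneOn ⟨hx.1, by linarith [hx.2]⟩ ⟨ha0, ha1⟩ hx.2
      refine ⟨yy x / yy a, hK1, ?_⟩
      rw [hfv _ x hx (by linarith) (by field_simp), hxv, mul_div_cancel₀ _ hy.ne',
        Real.exp_log hv0]
  · intro K hK
    obtain ⟨h1, h2⟩ := hX K hK.le
    have hK0 : 0 < K := by linarith
    have g1 := hgt K hK.le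
    have g2 := hanti (Set.mem_Ici.2 le_rfl) (Set.mem_Ici.2 hK.le) hK
    rw [hf1] at g2
    rw [hfv K _ h1 hK0 h2, Real.exp_lt_exp] at g1 g2
    have hyX := yy_pos h1.1 (by linarith [h1.2])
    have e : K * (yy a * HH a (X K)) = LL (X K) + NN a := by
      unfold HH
      rw [h2]
      field_simp
    have hB' : yy a * HH a a = 4 / Real.pi * (FF (1 - a) * FF a) := by rw [HH_self ha0 ha1]; ring
    have hN : NN a = 4 / Real.pi * (FF (1 - a) * FF a) - LL a := by unfold NN; ring
    have g1' := mul_lt_mul_of_pos_left g1 hK0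
    have g2' := mul_lt_mul_of_pos_left g2 hK0
    rw [e, hN] at g1' g2'
    rw [hB'] at g2'
    have ht' : t = Real.exp (LL a) := by rw [← hLa, Real.exp_log ht]
    rw [hetav K _ h1 hK0 h2]
    rw [ht']
    rw [← Real.exp_add, ← Real.exp_add, Real.exp_lt_exp, Real.exp_lt_exp]
    constructor
    · have : 2 / Real.pi * FF (1 - a) * FF a = 4 / Real.pi * (FF (1 - a) * FF a) / 2 := by ring
      rw [this]; linarith
    · have : 4 / Real.pi * (K - 1) * FF (1 - a) * FF a
        = K * (4 / Real.pi * (FF (1 - a) * FF a)) - 4 / Real.pi * (FF (1 - a) * FF a) := by ring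
      rw [this]; linarith
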